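/- For a TS-module M of finite length, the subspace M^S of S-invariants is the maximal finite-dimensional TS-submodule of M: every finite-dimensional TS-submodule of M is contained in M^S (in particular S acts trivially on it), and M^S itself is finite-dimensional. -/

import Mathlib

noncomputable section

open scoped Classical

namespace PSW

/-! ### The affine group `λ.b : x ↦ λ·x + b` over a field `K`. -/

@[ext]
structure Aff (K : Type*) [Field K] where
  t : Kˣ
  s : K

namespace Aff

variable {K : Type*} [Field K]

instance : Mul (Aff K) := ⟨fun g h => ⟨g.t * h.t, g.s + (g.t : K) * h.s⟩⟩
instance : One (Aff K) := ⟨⟨1, 0⟩⟩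
instance : Inv (Aff K) := ⟨fun g => ⟨g.t⁻¹, -(((g.t⁻¹ : Kˣ) : K) * g.s)⟩⟩

@[simp] lemma mul_t (g h : Aff K) : (g * h).t = g.t * h.t := rfl
@[simp] lemma mul_s (g h : Aff K) : (g * h).s = g.s + (g.t : K) * h.s := rfl
@[simp] lemma one_t : (1 : Aff K).t = 1 := rfl
@[simp] lemma one_s : (1 : Aff K).s = 0 := rfl
@[simp] lemma inv_t (g : Aff K) : (g⁻¹).t = g.t⁻¹ := rfl
@[simp] lemma inv_s (g : Aff K) : (g⁻¹).s = -(((g.t⁻¹ : Kˣ) : K) * g.s) := rfl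

instance : Group (Aff K) where
  mul_assoc a b c := by
    ext
    · simp [mul_assoc]
    · simp only [mul_s, mul_t, Units.val_mul]; ring
  one_mul a := by ext <;> simp
  mul_one a := by ext <;> simp
  inv_mul_cancel a := by
    ext
    · simp
    · simp

/-- The element `x_λ` of the group `TS`. -/
def xT (u : Kˣ) : Aff K := ⟨u, 0⟩

/-- The element `s_b` of the group `TS`. -/
def sS (b : K) : Aff K := ⟨1, b⟩

@[simp] lemma xT_t (u : Kˣ) : (xT u : Aff K).t = u := rfl
@[simp] lemma xT_s (u : Kˣ) : (xT u : Aff K).s = 0 := rfl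
@[simp] lemma sS_t (b : K) : (sS b : Aff K).t = 1 := rfl
@[simp] lemma sS_s (b : K) : (sS b : Aff K).s = b := rfl

/-- `T ≅ k^×` as a subgroup of `TS`. -/
def xTHom : Kˣ →* Aff K where
  toFun := xT
  map_one' := rfl
  map_mul' u v := by ext <;> simp [xT]

@[simp] lemma xTHom_apply (u : Kˣ) : (xTHom u : Aff K) = xT u := rfl

lemma mul_sS (g : Aff K) (b : K) : g * sS b = sS ((g.t : K) * b) * g := by
  ext
  · simp
  · simp [add_comm]

lemma sS_mul (b : K) (g : Aff K) : sS b * g = g * sS (((g.t⁻¹ : Kˣ) : K) * b) := by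
  ext
  · simp
  · simp [Units.mul_inv_cancel_left, add_comm]

lemma aff_decomp (g : Aff K) : g = xT g.t * sS (((g.t⁻¹ : Kˣ) : K) * g.s) := by
  ext
  · simp
  · simp [Units.mul_inv_cancel_left]

instance [TopologicalSpace K] : TopologicalSpace (Aff K) :=
  TopologicalSpace.induced (fun g : Aff K => ((g.t, g.s) : Kˣ × K)) inferInstance

end Aff

/-! ### Generalities on representations of a monoid on complex vector spaces. -/

namespace GRep

variable {G : Type*} [Monoid G]

section MonoidModules

variable {V W : Type*} [AddCommMonoid V] [Module ℂ V] [AddCommMonoid W] [Module ℂ W]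

/-- A submodule invariant under the representation. -/
def Invariant (ρ : Representation ℂ G V) (U : Submodule ℂ V) : Prop :=
  ∀ (g : G) (v : V), v ∈ U → ρ g v ∈ U

/-- Equivariance of a linear map with respect to two representations. -/
def Equivariant (ρ : Representation ℂ G V) (σ : Representation ℂ G W) (f : V →ₗ[ℂ] W) : Prop :=
  ∀ (g : G) (v : V), f (ρ g v) = σ g (f v)

/-- Isomorphism of representations. -/
def Iso (ρ : Representation ℂ G V) (σ : Representation ℂ G W) : Prop :=
  ∃ e : V ≃ₗ[ℂ] W, ∀ (g : G) (v : V), e (ρ g v) = σ g (e v)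

/-- Irreducibility. -/
def Irred (ρ : Representation ℂ G V) : Prop :=
  Nontrivial V ∧ ∀ U : Submodule ℂ V, Invariant ρ U → U = ⊥ ∨ U = ⊤

/-- Subrepresentation on an invariant submodule. -/
def sub (ρ : Representation ℂ G V) {U : Submodule ℂ V} (hU : Invariant ρ U) :
    Representation ℂ G ↥U where
  toFun g := (ρ g).restrict fun v hv => hU g v hv
  map_one' := by
    apply LinearMap.ext; intro v; apply Subtype.ext
    simp [LinearMap.restrict_apply]
  map_mul' g h := by
    apply LinearMap.ext; intro v; apply Subtype.ext
    simp [LinearMap.restrict_apply]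

@[simp] lemma sub_apply (ρ : Representation ℂ G V) {U : Submodule ℂ V} (hU : Invariant ρ U)
    (g : G) (v : ↥U) : ((sub ρ hU g v : ↥U) : V) = ρ g (v : V) := rfl

lemma ker_invariant (ρ : Representation ℂ G V) (σ : Representation ℂ G W)
    (f : V →ₗ[ℂ] W) (hf : Equivariant ρ σ f) : Invariant ρ (LinearMap.ker f) := by
  intro g v hv
  rw [LinearMap.mem_ker] at hv ⊢
  rw [hf g v, hv, map_zero]

lemma range_invariant (ρ : Representation ℂ G V) (σ : Representation ℂ G W)
    (f : V →ₗ[ℂ] W) (hf : Equivariant ρ σ f) : Invariant σ (LinearMap.range f) := by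
  rintro g w ⟨v, rfl⟩
  exact ⟨ρ g v, hf g v⟩

lemma map_invariant (ρ : Representation ℂ G V) (σ : Representation ℂ G W)
    (f : V →ₗ[ℂ] W) (hf : Equivariant ρ σ f) (U : Submodule ℂ V) (hU : Invariant ρ U) :
    Invariant σ (U.map f) := by
  rintro g w ⟨v, hv, rfl⟩
  exact ⟨ρ g v, hU g v hv, hf g v⟩

end MonoidModules

section GroupModules

variable {V W : Type*} [AddCommGroup V] [Module ℂ V] [AddCommGroup W] [Module ℂ W]

/-- Quotient representation. -/
def quot (ρ : Representation ℂ G V) (U : Submodule ℂ V) (hU : Invariant ρ U) :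
    Representation ℂ G (V ⧸ U) where
  toFun g := U.mapQ U (ρ g) fun v hv => hU g v hv
  map_one' := by
    apply LinearMap.ext; intro x
    obtain ⟨v, rfl⟩ := Submodule.Quotient.mk_surjective U x
    simp [Submodule.mapQ_apply]
  map_mul' g h := by
    apply LinearMap.ext; intro x
    obtain ⟨v, rfl⟩ := Submodule.Quotient.mk_surjective U x
    simp [Submodule.mapQ_apply]

@[simp] lemma quot_apply (ρ : Representation ℂ G V) (U : Submodule ℂ V) (hU : Invariant ρ U)
    (g : G) (v : V) :
    quot ρ U hU g (Submodule.Quotient.mk v) = Submodule.Quotient.mk (ρ g v) := rfl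

/-- Subquotient representation on `B/A`. -/
def subquot (ρ : Representation ℂ G V) {A B : Submodule ℂ V}
    (hA : Invariant ρ A) (hB : Invariant ρ B) :
    Representation ℂ G (↥B ⧸ A.comap B.subtype) :=
  quot (sub ρ hB) (A.comap B.subtype) fun g v hv => hA g v.1 hv

lemma mkQ_equivariant (ρ : Representation ℂ G V) (U : Submodule ℂ V) (hU : Invariant ρ U) :
    Equivariant ρ (quot ρ U hU) U.mkQ := by
  intro g v
  show Submodule.Quotient.mk (ρ g v) = quot ρ U hU g (Submodule.Quotient.mk v)
  rw [quot_apply]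

end GroupModules

end GRep

/-! ### TS-modules: representations of the affine group. -/

/-- A `TS`-module structure on `V` is a representation of the group `TS ≅ Gl_a(1)`. -/
abbrev Rep (K : Type*) [Field K] (V : Type*) [AddCommGroup V] [Module ℂ V] :=
  Representation ℂ (Aff K) V

section RepDefs

open Aff

variable {K : Type*} [Field K]
variable {V W : Type*} [AddCommGroup V] [Module ℂ V] [AddCommGroup W] [Module ℂ W]

/-- Smoothness: every vector has open stabilizer. -/
def IsSmoothRep [TopologicalSpace K] (ρ : Rep K V) : Prop :=
  ∀ v : V, IsOpen {g : Aff K | ρ g v = v}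

/-- Smoothness of a `T`-module, i.e. of a representation of `T ≅ k^×`. -/
def TIsSmooth {X : Type*} [AddCommMonoid X] [Module ℂ X] [TopologicalSpace K]
    (τ : Representation ℂ Kˣ X) : Prop :=
  ∀ x : X, IsOpen {u : Kˣ | τ u x = x}

/-- Smooth character of `T ≅ k^×` (open kernel, equivalently locally constant). -/
def SmoothMulChar [TopologicalSpace K] (χ : Kˣ →* ℂˣ) : Prop :=
  IsOpen {u : Kˣ | χ u = 1}

/-- The space `V^S` of `S`-invariants. -/
def sInv (ρ : Rep K V) : Submodule ℂ V where
  carrier := {v | ∀ b : K, ρ (sS b) v = v}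
  zero_mem' := fun b => map_zero _
  add_mem' {a b} ha hb := fun c => by rw [map_add, ha c, hb c]
  smul_mem' c v hv := fun b => by rw [map_smul, hv b]

@[simp] lemma mem_sInv (ρ : Rep K V) (v : V) :
    v ∈ sInv ρ ↔ ∀ b : K, ρ (sS b) v = v := Iff.rfl

/-- The `χ`-eigenspace `X^{T,χ}` of a `T`-module. -/
def tEigenT {X : Type*} [AddCommMonoid X] [Module ℂ X]
    (τ : Representation ℂ Kˣ X) (χ : Kˣ →* ℂˣ) : Submodule ℂ X where
  carrier := {x | ∀ u : Kˣ, τ u x = (χ u : ℂ) • x}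
  zero_mem' := fun u => by simp
  add_mem' {a b} ha hb := fun u => by rw [map_add, ha u, hb u, smul_add]
  smul_mem' c x hx := fun u => by rw [map_smul, hx u]; exact smul_comm c ((χ u : ℂ)) x

@[simp] lemma mem_tEigenT {X : Type*} [AddCommMonoid X] [Module ℂ X]
    (τ : Representation ℂ Kˣ X) (χ : Kˣ →* ℂˣ) (x : X) :
    x ∈ tEigenT τ χ ↔ ∀ u : Kˣ, τ u x = (χ u : ℂ) • x := Iff.rfl

/-- The `χ`-eigenspace `V^{T,χ}` of a `TS`-module. -/
def tEigen (ρ : Rep K V) (χ : Kˣ →* ℂˣ) : Submodule ℂ V := tEigenT (ρ.comp xTHom) χ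

/-- The kernel of the projection to the `S`-coinvariants `V_S`. -/
def sCoinvKer (ρ : Rep K V) : Submodule ℂ V :=
  Submodule.span ℂ {w : V | ∃ (b : K) (v : V), w = ρ (sS b) v - v}

/-- The kernel of the projection to the twisted coinvariants `V_{S,ψ'}`. -/
def sTwistKer (ρ : Rep K V) (ψ' : AddChar K ℂ) : Submodule ℂ V :=
  Submodule.span ℂ {w : V | ∃ (b : K) (v : V), w = ρ (sS b) v - ψ' b • v}

/-- The kernel of the projection to the `χ`-coinvariants `X_{T,χ}` of a `T`-module. -/
def tTwistKerT {X : Type*} [AddCommGroup X] [Module ℂ X]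
    (τ : Representation ℂ Kˣ X) (χ : Kˣ →* ℂˣ) : Submodule ℂ X :=
  Submodule.span ℂ {w : X | ∃ (u : Kˣ) (x : X), w = τ u x - (χ u : ℂ) • x}

/-- The kernel of the projection to the `χ`-coinvariants `V_{T,χ}` of a `TS`-module. -/
def tTwistKer (ρ : Rep K V) (χ : Kˣ →* ℂˣ) : Submodule ℂ V := tTwistKerT (ρ.comp xTHom) χ

lemma sCoinvKer_invariant (ρ : Rep K V) : GRep.Invariant ρ (sCoinvKer ρ) := by
  intro g v hv
  have h : sCoinvKer ρ ≤ Submodule.comap (ρ g) (sCoinvKer ρ) := by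
    refine Submodule.span_le.2 ?_
    rintro w ⟨b, v', rfl⟩
    simp only [SetLike.mem_coe, Submodule.mem_comap, map_sub]
    have h1 : ρ g (ρ (sS b) v') = ρ (sS ((g.t : K) * b)) (ρ g v') := by
      rw [← Module.End.mul_apply, ← map_mul, mul_sS, map_mul, Module.End.mul_apply]
    rw [h1]
    exact Submodule.subset_span ⟨(g.t : K) * b, ρ g v', rfl⟩
  exact h hv

lemma sInv_invariant (ρ : Rep K V) : GRep.Invariant ρ (sInv ρ) := by
  intro g v hv
  rw [mem_sInv] at hv ⊢
  intro b
  have h1 : ρ (sS b) (ρ g v) = ρ g (ρ (sS (((g.t⁻¹ : Kˣ) : K) * b)) v) := by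
    rw [← Module.End.mul_apply, ← map_mul, sS_mul, map_mul, Module.End.mul_apply]
  rw [h1, hv _]

/-- The `S`-coinvariants `π₀(V) = V_S` as a `TS`-module (`S` acting trivially). -/
def piZeroRep (ρ : Rep K V) : Rep K (V ⧸ sCoinvKer ρ) :=
  GRep.quot ρ (sCoinvKer ρ) (sCoinvKer_invariant ρ)

/-- The `S`-coinvariants `π₀(V) = V_S` as a `T`-module. -/
def piZeroT (ρ : Rep K V) : Representation ℂ Kˣ (V ⧸ sCoinvKer ρ) :=
  (piZeroRep ρ).comp xTHom

/-- The `T`-module structure on `κ(V) = V^S`. -/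
def sInvT (ρ : Rep K V) : Representation ℂ Kˣ ↥(sInv ρ) :=
  (GRep.sub ρ (sInv_invariant ρ)).comp xTHom

/-- A `TS`-module is perfect if all its eigenspaces `V^{T,χ}` for smooth `χ` vanish. -/
def Perfect [TopologicalSpace K] (ρ : Rep K V) : Prop :=
  ∀ χ : Kˣ →* ℂˣ, SmoothMulChar χ → tEigen ρ χ = ⊥

/-- A finite-dimensional `T`-module is cyclic if each generalized eigenspace is a single
Jordan block; equivalently all eigenspaces `X^{T,χ}` have dimension at most one. -/
def TCyclic {X : Type*} [AddCommGroup X] [Module ℂ X]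
    (τ : Representation ℂ Kˣ X) : Prop :=
  ∀ χ : Kˣ →* ℂˣ, Module.finrank ℂ ↥(tEigenT τ χ) ≤ 1

lemma sCoinvKer_le_comap (ρ : Rep K V) (σ : Rep K W)
    (f : V →ₗ[ℂ] W) (hf : GRep.Equivariant ρ σ f) :
    sCoinvKer ρ ≤ (sCoinvKer σ).comap f := by
  refine Submodule.span_le.2 ?_
  rintro w ⟨b, v, rfl⟩
  simp only [SetLike.mem_coe, Submodule.mem_comap, map_sub]
  rw [hf]
  exact Submodule.subset_span ⟨b, f v, rfl⟩

/-- The map induced by an equivariant map on the `S`-coinvariants `π₀`. -/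
def piZeroMap (ρ : Rep K V) (σ : Rep K W) (f : V →ₗ[ℂ] W) (hf : GRep.Equivariant ρ σ f) :
    (V ⧸ sCoinvKer ρ) →ₗ[ℂ] (W ⧸ sCoinvKer σ) :=
  Submodule.mapQ _ _ f (sCoinvKer_le_comap ρ σ f hf)

lemma piZeroMap_equivariant (ρ : Rep K V) (σ : Rep K W) (f : V →ₗ[ℂ] W)
    (hf : GRep.Equivariant ρ σ f) :
    GRep.Equivariant (piZeroRep ρ) (piZeroRep σ) (piZeroMap ρ σ f hf) := by
  intro g x
  obtain ⟨v, rfl⟩ := Submodule.Quotient.mk_surjective _ x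
  show piZeroMap ρ σ f hf (piZeroRep ρ g (Submodule.Quotient.mk v))
      = piZeroRep σ g (piZeroMap ρ σ f hf (Submodule.Quotient.mk v))
  rw [show piZeroRep ρ g (Submodule.Quotient.mk v) = Submodule.Quotient.mk (ρ g v) from rfl]
  rw [show piZeroMap ρ σ f hf (Submodule.Quotient.mk v) = Submodule.Quotient.mk (f v) from rfl]
  rw [show piZeroMap ρ σ f hf (Submodule.Quotient.mk (ρ g v))
      = Submodule.Quotient.mk (f (ρ g v)) from rfl]
  rw [show piZeroRep σ g (Submodule.Quotient.mk (f v)) = Submodule.Quotient.mk (σ g (f v)) from rfl]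
  rw [hf]

lemma kappaImg_invariant (ρ : Rep K V) :
    GRep.Invariant (piZeroT ρ) ((sInv ρ).map (sCoinvKer ρ).mkQ) := by
  rintro u w ⟨v, hv, rfl⟩
  refine ⟨ρ (xT u) v, sInv_invariant ρ (xT u) v hv, ?_⟩
  rfl

end RepDefs

/-! ### Composition series and degree. -/

/-- A composition series for a `TS`-module, witnessing finite length: a maximal chain of
invariant submodules (the subquotients are then irreducible). -/
structure CompSeries {K : Type*} [Field K] {V : Type*} [AddCommGroup V] [Module ℂ V]
    (ρ : Rep K V) where
  n : ℕ
  W : ℕ → Submodule ℂ V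
  bot : W 0 = ⊥
  top : W n = ⊤
  inv : ∀ i, GRep.Invariant ρ (W i)
  lt : ∀ i < n, W i < W (i + 1)
  maximal : ∀ i < n, ∀ C : Submodule ℂ V, GRep.Invariant ρ C → W i ≤ C → C ≤ W (i + 1) →
    C = W i ∨ C = W (i + 1)

/-- The number of Jordan–Hölder constituents of a composition series isomorphic to a given
representation `σ` (applied with `σ = 𝕊`, this is the degree). -/
def CompSeries.deg {K : Type*} [Field K] {V : Type*} [AddCommGroup V] [Module ℂ V]
    {ρ : Rep K V} (c : CompSeries ρ) {W₀ : Type*} [AddCommMonoid W₀] [Module ℂ W₀]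
    (σ : Representation ℂ (Aff K) W₀) : ℕ :=
  (Finset.univ.filter fun i : Fin c.n =>
    GRep.Iso (GRep.subquot ρ (c.inv i.1) (c.inv (i.1 + 1))) σ).card

/-! ### Fiber products of a `T`-module with a `TS`-module over a `T`-module. -/

section Fiber

open Aff

variable {K : Type*} [Field K]
variable {X Y E : Type*} [AddCommGroup X] [Module ℂ X] [AddCommGroup Y] [Module ℂ Y]
  [AddCommGroup E] [Module ℂ E]

/-- The product `TS`-module `X × E` where `S` acts trivially on the `T`-module `X`. -/
def prodRepTE (τ : Representation ℂ Kˣ X) (ρ : Rep K E) : Rep K (X × E) where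
  toFun g := (τ g.t).prodMap (ρ g)
  map_one' := by
    apply LinearMap.ext; rintro ⟨x, v⟩
    simp
  map_mul' g h := by
    apply LinearMap.ext; rintro ⟨x, v⟩
    simp [map_mul]

/-- The underlying space of the fiber product `𝔼[f] = X ×_Y E`. -/
def fiberKer (f : X →ₗ[ℂ] Y) (q : E →ₗ[ℂ] Y) : Submodule ℂ (X × E) :=
  LinearMap.ker (f.comp (LinearMap.fst ℂ X E) - q.comp (LinearMap.snd ℂ X E))

lemma mem_fiberKer (f : X →ₗ[ℂ] Y) (q : E →ₗ[ℂ] Y) (p : X × E) :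
    p ∈ fiberKer f q ↔ f p.1 = q p.2 := by
  simp [fiberKer, sub_eq_zero]

lemma fiber_invariant (τX : Representation ℂ Kˣ X) (ρE : Rep K E)
    (τY : Representation ℂ Kˣ Y) (f : X →ₗ[ℂ] Y) (q : E →ₗ[ℂ] Y)
    (hf : ∀ (u : Kˣ) (x : X), f (τX u x) = τY u (f x))
    (hq : sCoinvKer ρE ≤ LinearMap.ker q)
    (hqT : ∀ (u : Kˣ) (v : E), q (ρE (xT u) v) = τY u (q v)) :
    GRep.Invariant (prodRepTE τX ρE) (fiberKer f q) := by
  intro g p hp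
  rw [mem_fiberKer] at hp ⊢
  have hsb : q (ρE (sS (((g.t⁻¹ : Kˣ) : K) * g.s)) p.2) = q p.2 := by
    have h1 : ρE (sS (((g.t⁻¹ : Kˣ) : K) * g.s)) p.2 - p.2 ∈ sCoinvKer ρE :=
      Submodule.subset_span ⟨_, _, rfl⟩
    have h2 := hq h1
    rw [LinearMap.mem_ker, map_sub, sub_eq_zero] at h2
    exact h2
  have hdecomp : ρE g p.2 = ρE (xT g.t) (ρE (sS (((g.t⁻¹ : Kˣ) : K) * g.s)) p.2) := by
    conv_lhs => rw [aff_decomp g]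
    rw [map_mul, Module.End.mul_apply]
  have h1 : ((prodRepTE τX ρE) g p).1 = τX g.t p.1 := rfl
  have h2 : ((prodRepTE τX ρE) g p).2 = ρE g p.2 := rfl
  rw [h1, h2, hf, hp, hdecomp, hqT, hsb]

end Fiber

/-! ### Jordan blocks of finite-dimensional `T`-modules. -/

section Jordan

variable {K : Type*} [Field K]
variable {X : Type*} [AddCommGroup X] [Module ℂ X]

/-- A Jordan block of a `T`-module: a nonzero indecomposable invariant direct summand. -/
def IsJordanBlock (τ : Representation ℂ Kˣ X) (J : Submodule ℂ X) : Prop :=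
  J ≠ ⊥ ∧ GRep.Invariant τ J ∧ (∃ C : Submodule ℂ X, GRep.Invariant τ C ∧ IsCompl J C) ∧
    ∀ A B : Submodule ℂ X, GRep.Invariant τ A → GRep.Invariant τ B → A ≤ J → B ≤ J →
      A ⊓ B = ⊥ → A ⊔ B = J → A = ⊥ ∨ B = ⊥

end Jordan

/-! ### Invariants and coinvariants for a normal subgroup of an arbitrary group. -/

section Grp

variable {Γ : Type*} [Group Γ]
variable {V W : Type*} [AddCommGroup V] [Module ℂ V] [AddCommGroup W] [Module ℂ W]

/-- Invariants `V^N` under a subgroup `N`. -/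
def grpInv (ρ : Representation ℂ Γ V) (N : Subgroup Γ) : Submodule ℂ V where
  carrier := {v | ∀ n ∈ N, ρ n v = v}
  zero_mem' := fun n _ => map_zero _
  add_mem' {a b} ha hb := fun n hn => by rw [map_add, ha n hn, hb n hn]
  smul_mem' c v hv := fun n hn => by rw [map_smul, hv n hn]

@[simp] lemma mem_grpInv (ρ : Representation ℂ Γ V) (N : Subgroup Γ) (v : V) :
    v ∈ grpInv ρ N ↔ ∀ n ∈ N, ρ n v = v := Iff.rfl

/-- The kernel of the projection to the coinvariants `V_N` under a subgroup `N`. -/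
def grpCoinvKer (ρ : Representation ℂ Γ V) (N : Subgroup Γ) : Submodule ℂ V :=
  Submodule.span ℂ {w : V | ∃ n ∈ N, ∃ v : V, w = ρ n v - v}

lemma grpInv_invariant (ρ : Representation ℂ Γ V) (N : Subgroup Γ) [hN : N.Normal] :
    GRep.Invariant ρ (grpInv ρ N) := by
  intro γ v hv
  rw [mem_grpInv] at hv ⊢
  intro n hn
  have hmem : γ⁻¹ * n * γ ∈ N := by
    have := hN.conj_mem n hn γ⁻¹
    simpa using this
  have key : ρ n (ρ γ v) = ρ γ (ρ (γ⁻¹ * n * γ) v) := by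
    rw [← Module.End.mul_apply, ← map_mul, ← Module.End.mul_apply, ← map_mul]
    congr 1
    group
  rw [key, hv _ hmem]

lemma grpCoinvKer_invariant (ρ : Representation ℂ Γ V) (N : Subgroup Γ) [hN : N.Normal] :
    GRep.Invariant ρ (grpCoinvKer ρ N) := by
  intro γ v hv
  have h : grpCoinvKer ρ N ≤ Submodule.comap (ρ γ) (grpCoinvKer ρ N) := by
    refine Submodule.span_le.2 ?_
    rintro w ⟨n, hn, v', rfl⟩
    simp only [SetLike.mem_coe, Submodule.mem_comap, map_sub]
    have key : ρ γ (ρ n v') = ρ (γ * n * γ⁻¹) (ρ γ v') := by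
      rw [← Module.End.mul_apply, ← map_mul, ← Module.End.mul_apply, ← map_mul]
      congr 1
      group
    rw [key]
    exact Submodule.subset_span ⟨γ * n * γ⁻¹, hN.conj_mem n hn γ, ρ γ v', rfl⟩
  exact h hv

/-- The map induced on `N`-invariants by an equivariant map. -/
def grpInvRestrict (ρ : Representation ℂ Γ V) (σ : Representation ℂ Γ W) (N : Subgroup Γ)
    (f : V →ₗ[ℂ] W) (hf : GRep.Equivariant ρ σ f) : ↥(grpInv ρ N) →ₗ[ℂ] ↥(grpInv σ N) :=
  f.restrict (fun v hv => by
    rw [mem_grpInv] at hv ⊢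
    intro n hn
    rw [← hf n v, hv n hn])

lemma grpCoinvKer_le_comap (ρ : Representation ℂ Γ V) (σ : Representation ℂ Γ W) (N : Subgroup Γ)
    (f : V →ₗ[ℂ] W) (hf : GRep.Equivariant ρ σ f) :
    grpCoinvKer ρ N ≤ (grpCoinvKer σ N).comap f := by
  refine Submodule.span_le.2 ?_
  rintro w ⟨n, hn, v, rfl⟩
  simp only [SetLike.mem_coe, Submodule.mem_comap, map_sub]
  rw [hf]
  exact Submodule.subset_span ⟨n, hn, f v, rfl⟩

/-- The map induced on `N`-coinvariants by an equivariant map. -/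
def grpCoinvMap (ρ : Representation ℂ Γ V) (σ : Representation ℂ Γ W) (N : Subgroup Γ)
    (f : V →ₗ[ℂ] W) (hf : GRep.Equivariant ρ σ f) :
    (V ⧸ grpCoinvKer ρ N) →ₗ[ℂ] (W ⧸ grpCoinvKer σ N) :=
  Submodule.mapQ _ _ f (grpCoinvKer_le_comap ρ σ N f hf)

end Grp

/-! ### Tate L-factors of finite-dimensional `T`-modules. -/

section Lfactor

variable {K : Type*} [NontriviallyNormedField K]
variable {X : Type*} [AddCommGroup X] [Module ℂ X]

/-- The part of a `T`-module where the `χ`-twisted action is unramified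
(trivial on the norm-one units). -/
def unrPart (τ : Representation ℂ Kˣ X) (χ : Kˣ →* ℂˣ) : Submodule ℂ X where
  carrier := {x | ∀ u : Kˣ, ‖(u : K)‖ = 1 → (χ u : ℂ) • τ u x = x}
  zero_mem' := fun u _ => by simp
  add_mem' {a b} ha hb := fun u hu => by rw [map_add, smul_add, ha u hu, hb u hu]
  smul_mem' c x hx := fun u hu => by
    rw [map_smul, smul_comm, hx u hu]

lemma unrPart_stable (τ : Representation ℂ Kˣ X) (χ : Kˣ →* ℂˣ) (ϖ : Kˣ) :
    ∀ x ∈ unrPart τ χ, ((χ ϖ : ℂ) • τ ϖ) x ∈ unrPart τ χ := by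
  intro x hx u hu
  have comm : τ u (τ ϖ x) = τ ϖ (τ u x) := by
    rw [← Module.End.mul_apply, ← map_mul, mul_comm, map_mul, Module.End.mul_apply]
  calc (χ u : ℂ) • τ u (((χ ϖ : ℂ) • τ ϖ) x)
      = (χ ϖ : ℂ) • ((χ u : ℂ) • τ u (τ ϖ x)) := by
        rw [LinearMap.smul_apply, map_smul, smul_comm]
    _ = (χ ϖ : ℂ) • τ ϖ ((χ u : ℂ) • τ u x) := by rw [comm, map_smul]
    _ = ((χ ϖ : ℂ) • τ ϖ) x := by rw [hx u hu, LinearMap.smul_apply]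

/-- The twisted uniformizer action on the unramified part. -/
def twistOp (τ : Representation ℂ Kˣ X) (χ : Kˣ →* ℂˣ) (ϖ : Kˣ) :
    ↥(unrPart τ χ) →ₗ[ℂ] ↥(unrPart τ χ) :=
  LinearMap.restrict ((χ ϖ : ℂ) • τ ϖ) (unrPart_stable τ χ ϖ)

/-- The Tate `L`-factor `L(s, χ ⊗ X) = det(1 - q^{-s}·(χ·τ)(ϖ) | X^{unr,χ})⁻¹` of a
(finite-dimensional) `T`-module `X`, relative to a uniformizer `ϖ`. -/
def Lfactor (τ : Representation ℂ Kˣ X) (χ : Kˣ →* ℂˣ) (ϖ : Kˣ) (s : ℂ) : ℂ :=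
  (LinearMap.det (LinearMap.id - (‖(ϖ : K)‖ : ℂ) ^ s • twistOp τ χ ϖ))⁻¹

end Lfactor

/-! ### The concrete `TS`-modules `𝕊`, `C_c^∞(k)`, `C_b^∞(k^×)` and `𝔼[χ]`. -/

section Concrete

open Aff

variable (K : Type*) [NontriviallyNormedField K]

/-- The representation of `TS` on functions on `k^×`:
`(s_b g)(x) = ψ(bx) g(x)`, `(x_λ g)(x) = g(xλ)`. -/
def repCx (ψ : AddChar K ℂ) : Rep K (Kˣ → ℂ) where
  toFun g :=
    { toFun := fun f x => ψ (g.s * (x : K)) * f (x * g.t)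
      map_add' := fun f₁ f₂ => by funext x; simp [mul_add]
      map_smul' := fun c f => by
        funext x
        simp only [Pi.smul_apply, smul_eq_mul, RingHom.id_apply]
        ring }
  map_one' := by
    apply LinearMap.ext; intro f; funext x
    simp
  map_mul' g h := by
    apply LinearMap.ext; intro f; funext x
    show ψ ((g.s + (g.t : K) * h.s) * (x : K)) * f (x * (g.t * h.t))
        = ψ (g.s * (x : K)) * (ψ (h.s * ((x * g.t : Kˣ) : K)) * f (x * g.t * h.t))
    have harg : (g.s + (g.t : K) * h.s) * (x : K)
        = g.s * (x : K) + h.s * ((x * g.t : Kˣ) : K) := by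
      push_cast
      ring
    rw [harg, AddChar.map_add_eq_mul, ← mul_assoc x g.t h.t]
    ring

@[simp] lemma repCx_apply (ψ : AddChar K ℂ) (g : Aff K) (f : Kˣ → ℂ) (x : Kˣ) :
    repCx K ψ g f x = ψ (g.s * (x : K)) * f (x * g.t) := rfl

/-- The `χ`-twisted representation of `TS` on functions on `k`:
`(s_b g)(x) = ψ(bx) g(x)`, `(x_λ g)(x) = χ(λ) g(xλ)`.  (Take `χ = 1` for the
untwisted action on `C_c^∞(k)`; the module `𝔼[χ]` is `C_c^∞(k)` with the twisted action.) -/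
def repCc (ψ : AddChar K ℂ) (χ : Kˣ →* ℂˣ) : Rep K (K → ℂ) where
  toFun g :=
    { toFun := fun f x => (χ g.t : ℂ) * ψ (g.s * x) * f (x * (g.t : K))
      map_add' := fun f₁ f₂ => by funext x; simp [mul_add]
      map_smul' := fun c f => by
        funext x
        simp only [Pi.smul_apply, smul_eq_mul, RingHom.id_apply]
        ring }
  map_one' := by
    apply LinearMap.ext; intro f; funext x
    simp
  map_mul' g h := by
    apply LinearMap.ext; intro f; funext x
    show (χ (g.t * h.t) : ℂ) * ψ ((g.s + (g.t : K) * h.s) * x) * f (x * ((g.t * h.t : Kˣ) : K))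
        = (χ g.t : ℂ) * ψ (g.s * x) * ((χ h.t : ℂ) * ψ (h.s * (x * (g.t : K)))
            * f (x * (g.t : K) * (h.t : K)))
    have harg : (g.s + (g.t : K) * h.s) * x = g.s * x + h.s * (x * (g.t : K)) := by ring
    have harg2 : x * ((g.t * h.t : Kˣ) : K) = x * (g.t : K) * (h.t : K) := by
      push_cast
      ring
    rw [harg, harg2, AddChar.map_add_eq_mul, map_mul]
    push_cast
    ring

@[simp] lemma repCc_apply (ψ : AddChar K ℂ) (χ : Kˣ →* ℂˣ) (g : Aff K) (f : K → ℂ) (x : K) :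
    repCc K ψ χ g f x = (χ g.t : ℂ) * ψ (g.s * x) * f (x * (g.t : K)) := rfl

/-- The one-dimensional `TS`-module `ℂ_χ` on which `S` acts trivially and `x_λ` by `χ(λ)`. -/
def chiRep (χ : Kˣ →* ℂˣ) : Rep K ℂ where
  toFun g := (χ g.t : ℂ) • LinearMap.id
  map_one' := by
    apply LinearMap.ext; intro c
    simp
  map_mul' g h := by
    apply LinearMap.ext; intro c
    simp only [mul_t, map_mul, LinearMap.smul_apply, LinearMap.id_apply, Module.End.mul_apply,
      Units.val_mul, smul_eq_mul]
    ring

/-- `C_c^∞(k)`: locally constant, compactly supported functions on `k`. -/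
def CcK : Submodule ℂ (K → ℂ) where
  carrier := {f | IsLocallyConstant f ∧ HasCompactSupport f}
  zero_mem' := ⟨IsLocallyConstant.const 0, by
    rw [hasCompactSupport_def]
    simp⟩
  add_mem' {a b} ha hb := ⟨ha.1.comp₂ hb.1 (· + ·), ha.2.add hb.2⟩
  smul_mem' c f hf := by
    refine ⟨?_, hf.2.mono (Function.support_const_smul_subset c f)⟩
    exact hf.1.comp (fun z => c * z)

@[simp] lemma mem_CcK (f : K → ℂ) :
    f ∈ CcK K ↔ IsLocallyConstant f ∧ HasCompactSupport f := Iff.rfl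

/-- `𝕊 = C_c^∞(k^×)`: locally constant, compactly supported functions on `k^×`. -/
def SSx : Submodule ℂ (Kˣ → ℂ) where
  carrier := {f | IsLocallyConstant f ∧ HasCompactSupport f}
  zero_mem' := ⟨IsLocallyConstant.const 0, by
    rw [hasCompactSupport_def]
    simp⟩
  add_mem' {a b} ha hb := ⟨ha.1.comp₂ hb.1 (· + ·), ha.2.add hb.2⟩
  smul_mem' c f hf := by
    refine ⟨?_, hf.2.mono (Function.support_const_smul_subset c f)⟩
    exact hf.1.comp (fun z => c * z)

@[simp] lemma mem_SSx (f : Kˣ → ℂ) :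
    f ∈ SSx K ↔ IsLocallyConstant f ∧ HasCompactSupport f := Iff.rfl

/-- `C_b^∞(k^×)`: locally constant functions on `k^×` whose support has compact closure
in `k`. -/
def Cb : Submodule ℂ (Kˣ → ℂ) where
  carrier := {f | IsLocallyConstant f ∧
    IsCompact (closure (((↑) : Kˣ → K) '' Function.support f))}
  zero_mem' := ⟨IsLocallyConstant.const 0, by simp⟩
  add_mem' {a b} ha hb := by
    refine ⟨ha.1.comp₂ hb.1 (· + ·), ?_⟩
    refine IsCompact.of_isClosed_subset (ha.2.union hb.2) isClosed_closure ?_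
    refine closure_minimal ?_ (ha.2.isClosed.union hb.2.isClosed)
    refine (Set.image_mono (Function.support_add _ _)).trans ?_
    rw [Set.image_union]
    exact Set.union_subset_union subset_closure subset_closure
  smul_mem' c f hf := by
    refine ⟨hf.1.comp (fun z => c * z), ?_⟩
    refine IsCompact.of_isClosed_subset hf.2 isClosed_closure ?_
    refine closure_mono ?_
    exact Set.image_mono (Function.support_const_smul_subset c f)

@[simp] lemma mem_Cb (f : Kˣ → ℂ) :
    f ∈ Cb K ↔ IsLocallyConstant f ∧
      IsCompact (closure (((↑) : Kˣ → K) '' Function.support f)) := Iff.rfl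

variable {K}

lemma SSx_invariant (ψ : AddChar K ℂ) (hψlc : IsLocallyConstant (⇑ψ)) :
    GRep.Invariant (repCx K ψ) (SSx K) := by
  rintro g f hf
  rw [mem_SSx] at hf ⊢
  obtain ⟨hlc, hcs⟩ := hf
  have heq : repCx K ψ g f
      = (fun x : Kˣ => ψ (g.s * (x : K))) * (f ∘ (Homeomorph.mulRight g.t)) := rfl
  constructor
  · rw [heq]
    refine IsLocallyConstant.mul ?_ ?_
    · exact hψlc.comp_continuous (continuous_const.mul Units.continuous_val)
    · exact hlc.comp_continuous (Homeomorph.mulRight g.t).continuous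
  · rw [heq]
    exact (hcs.comp_homeomorph (Homeomorph.mulRight g.t)).mul_left

lemma CcK_invariant (ψ : AddChar K ℂ) (hψlc : IsLocallyConstant (⇑ψ)) (χ : Kˣ →* ℂˣ) :
    GRep.Invariant (repCc K ψ χ) (CcK K) := by
  rintro g f hf
  rw [mem_CcK] at hf ⊢
  obtain ⟨hlc, hcs⟩ := hf
  have hne : ((g.t : Kˣ) : K) ≠ 0 := g.t.ne_zero
  have heq : repCc K ψ χ g f
      = (fun x : K => (χ g.t : ℂ) * ψ (g.s * x)) * (f ∘ (Homeomorph.mulRight₀ (g.t : K) hne)) :=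
    rfl
  constructor
  · rw [heq]
    refine IsLocallyConstant.mul ?_ ?_
    · exact ((hψlc.comp_continuous (continuous_const.mul continuous_id)).comp
        (fun z => (χ g.t : ℂ) * z))
    · exact hlc.comp_continuous (Homeomorph.mulRight₀ (g.t : K) hne).continuous
  · rw [heq]
    exact (hcs.comp_homeomorph (Homeomorph.mulRight₀ (g.t : K) hne)).mul_left

/-- The `TS`-module `𝕊 = C_c^∞(k^×)`. -/
def SRep (ψ : AddChar K ℂ) (hψlc : IsLocallyConstant (⇑ψ)) : Rep K ↥(SSx K) :=
  GRep.sub (repCx K ψ) (SSx_invariant ψ hψlc)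

/-- The `TS`-module `𝔼[χ]`, i.e. `C_c^∞(k)` with the `χ`-twisted action. -/
def ERep (ψ : AddChar K ℂ) (hψlc : IsLocallyConstant (⇑ψ)) (χ : Kˣ →* ℂˣ) : Rep K ↥(CcK K) :=
  GRep.sub (repCc K ψ χ) (CcK_invariant ψ hψlc χ)

/-- The `TS`-module `𝕊^s`, a direct sum of `s` copies of `𝕊`. -/
def SRepPow (ψ : AddChar K ℂ) (hψlc : IsLocallyConstant (⇑ψ)) (s : ℕ) :
    Rep K (Fin s → ↥(SSx K)) where
  toFun g := LinearMap.pi fun i => (SRep ψ hψlc g).comp (LinearMap.proj i)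
  map_one' := by
    apply LinearMap.ext; intro v; funext i
    simp
  map_mul' g h := by
    apply LinearMap.ext; intro v; funext i
    simp [map_mul]

/-- The submodule `E` of `C_b^∞(k^×)` consisting of functions which are `χ`-eigenvectors
modulo `𝕊`; the quotient `E/𝕊` is the `χ`-eigenspace of `C_b^∞(k^×)/𝕊`. -/
def quotEigen (ψ : AddChar K ℂ) (χ : Kˣ →* ℂˣ) : Submodule ℂ (Kˣ → ℂ) where
  carrier := {f | f ∈ Cb K ∧ ∀ u : Kˣ, repCx K ψ (Aff.xT u) f - (χ u : ℂ) • f ∈ SSx K}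
  zero_mem' := ⟨(Cb K).zero_mem, fun u => by simpa using (SSx K).zero_mem⟩
  add_mem' {a b} ha hb := by
    refine ⟨(Cb K).add_mem ha.1 hb.1, fun u => ?_⟩
    rw [map_add, smul_add, add_sub_add_comm]
    exact (SSx K).add_mem (ha.2 u) (hb.2 u)
  smul_mem' c f hf := by
    refine ⟨(Cb K).smul_mem c hf.1, fun u => ?_⟩
    rw [map_smul, smul_comm, ← smul_sub]
    exact (SSx K).smul_mem c (hf.2 u)

/-- Evaluation at `0 ∈ k`, realizing the quotient map `𝔼[χ] → ℂ_χ` with kernel `𝕊`. -/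
def ev0 : ↥(CcK K) →ₗ[ℂ] ℂ where
  toFun f := (f : K → ℂ) 0
  map_add' f g := rfl
  map_smul' c f := rfl

end Concrete

/-! ### The diagonal torus in GL(2). -/

section GL2

variable {K : Type*} [Field K]

/-- The diagonal element `diag(a, b)` of `GL(2, K)`. -/
def diagGL (a b : Kˣ) : Matrix.GeneralLinearGroup (Fin 2) K where
  val := Matrix.diagonal ![(a : K), (b : K)]
  inv := Matrix.diagonal ![((a : K))⁻¹, ((b : K))⁻¹]
  val_inv := by
    ext i j
    fin_cases i <;> fin_cases j <;>
      simp [Matrix.mul_apply, Fin.sum_univ_two, Matrix.diagonal, Matrix.one_apply,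
        a.ne_zero, b.ne_zero]
  inv_val := by
    ext i j
    fin_cases i <;> fin_cases j <;>
      simp [Matrix.mul_apply, Fin.sum_univ_two, Matrix.diagonal, Matrix.one_apply,
        a.ne_zero, b.ne_zero]

end GL2

/-!
By smoothness, all `s_b` with `b` near `0` act trivially on a finite-dimensional submodule `U`.
Conjugation by `x_l` turns `s_b` into `s_{lb}`, where `lb` is as close to `0` as we like, so every
`s_b` acts trivially on `U`.

A composition series cuts `V^S` into irreducible subquotients on which `B` acts through
the commutative group `T`. Since `T` is second countable, orbits of vectors in a smooth module are
countable, so these subquotients have countable dimension over the uncountable algebraically closed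
field `ℂ`. By Dixmier's form of Schur's lemma they are one-dimensional.
-/

section CountableDimension

open Cardinal

universe u v w

lemma isAlgebraic_of_rank_lt_mk {F : Type u} {E : Type v} [Field F] [Field E] [Algebra F E]
    (h : lift.{u} (Module.rank F E) < lift.{v} #F) : Algebra.IsAlgebraic F E := by
  refine ⟨fun a => ?_⟩
  by_contra ha
  -- the elements `(a - x)⁻¹`, `x ∈ F`, are linearly independent
  exact h.not_ge (Transcendental.linearIndependent_sub_inv ha).cardinal_lift_le_rank

lemma finrank_eq_one_of_rank_lt_mk {F : Type u} {A : Type v} {M : Type w} [Field F]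
    [IsAlgClosed F] [CommRing A] [Algebra F A] [AddCommGroup M] [Module F M] [Module A M]
    [IsScalarTower F A M] [IsSimpleModule A M]
    (h : lift.{u} (Module.rank F M) < lift.{w} #F) : Module.finrank F M = 1 := by
  obtain ⟨m, _, ⟨e⟩⟩ := isSimpleModule_iff_quot_maximal.mp ‹IsSimpleModule A M›
  let _ : Field (A ⧸ m) := Ideal.Quotient.field m
  have hrank : lift.{u} (Module.rank F (A ⧸ m)) < lift.{v} #F := by
    have hrank_eq := congrArg lift.{u} (e.restrictScalars F).lift_rank_eq
    have hlt := lift_lt.{max u w, v}.mpr h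
    refine lift_lt.{max u v, w}.mp ?_
    simp only [lift_lift] at hrank_eq hlt ⊢
    exact hrank_eq.symm.trans_lt hlt
  have : Algebra.IsAlgebraic F (A ⧸ m) := isAlgebraic_of_rank_lt_mk hrank
  let residueEquiv : F ≃ₗ[F] A ⧸ m :=
    LinearEquiv.ofBijective (Algebra.linearMap F (A ⧸ m))
      IsAlgClosed.algebraMap_bijective_of_isIntegral
  rw [(e.restrictScalars F ≪≫ₗ residueEquiv.symm).finrank_eq, Module.finrank_self]

end CountableDimension

namespace GRep

section Irreducible

variable {G V : Type*} [Monoid G] [AddCommGroup V] [Module ℂ V] {ρ : Representation ℂ G V}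

lemma Invariant.inf {A B : Submodule ℂ V} (hA : Invariant ρ A) (hB : Invariant ρ B) :
    Invariant ρ (A ⊓ B) :=
  fun g v hv => ⟨hA g v hv.1, hB g v hv.2⟩

lemma Invariant.sup {A B : Submodule ℂ V} (hA : Invariant ρ A) (hB : Invariant ρ B) :
    Invariant ρ (A ⊔ B) := fun g =>
  have hle : A ⊔ B ≤ (A ⊔ B).comap (ρ g) :=
    sup_le (fun v hv => Submodule.mem_sup_left (hA g v hv))
      fun v hv => Submodule.mem_sup_right (hB g v hv)
  fun _ hv => hle hv

lemma invariant_span_range (ρ : Representation ℂ G V) (v : V) :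
    Invariant ρ (Submodule.span ℂ (Set.range fun g => ρ g v)) := by
  intro g w hw
  suffices hle : Submodule.span ℂ (Set.range fun h => ρ h v) ≤
      (Submodule.span ℂ (Set.range fun h => ρ h v)).comap (ρ g) from hle hw
  rw [Submodule.span_le]
  rintro _ ⟨h, rfl⟩
  exact Submodule.subset_span ⟨g * h, by simp⟩

lemma Irred.span_range_eq_top (hρ : Irred ρ) {v : V} (hv : v ≠ 0) :
    Submodule.span ℂ (Set.range fun g => ρ g v) = ⊤ := by
  refine (hρ.2 _ (invariant_span_range ρ v)).resolve_left fun hbot => hv ?_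
  exact Submodule.span_eq_bot.mp hbot v ⟨1, by simp⟩

lemma Irred.isIrreducible (hρ : Irred ρ) : ρ.IsIrreducible where
  exists_pair_ne := by
    have := hρ.1
    exact ⟨⊥, ⊤, fun h => bot_ne_top (congrArg Subrepresentation.toSubmodule h)⟩
  eq_bot_or_eq_top U := by
    simp only [← Subrepresentation.toSubmodule_injective.eq_iff]
    exact hρ.2 _ fun g _ hv => U.apply_mem_toSubmodule g hv

lemma irred_subquot {A B : Submodule ℂ V} (hA : Invariant ρ A) (hB : Invariant ρ B)
    (hAB : A < B)
    (hmax : ∀ C : Submodule ℂ V, Invariant ρ C → A ≤ C → C ≤ B → C = A ∨ C = B) :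
    Irred (subquot ρ hA hB) := by
  refine ⟨Submodule.Quotient.nontrivial_iff.mpr
    fun h => hAB.not_ge (Submodule.comap_subtype_eq_top.mp h), fun U hU => ?_⟩
  let π := (A.comap B.subtype).mkQ
  let C : Submodule ℂ V := (U.comap π).map B.subtype
  have hC : Invariant ρ C := by
    rintro g _ ⟨b, hb, rfl⟩
    exact ⟨sub ρ hB g b, hU g _ hb, rfl⟩
  have hAC : A ≤ C := fun a ha =>
    ⟨⟨a, hAB.le ha⟩, by
      have : π ⟨a, hAB.le ha⟩ = 0 := (Submodule.Quotient.mk_eq_zero _).mpr ha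
      simp [this], rfl⟩
  have hUC : U = (C.comap B.subtype).map π := by
    rw [Submodule.comap_map_eq_of_injective B.injective_subtype,
      Submodule.map_comap_eq_of_surjective (Submodule.mkQ_surjective _)]
  rcases hmax C hC hAC (Submodule.map_subtype_le _ _) with h | h
  · left
    rw [hUC, h, Submodule.mkQ_map_self]
  · right
    rw [hUC, h, Submodule.comap_subtype_self, Submodule.map_top, Submodule.range_mkQ]

end Irreducible

section CountableOrbits

variable {G V W : Type*} [Monoid G] [AddCommGroup V] [Module ℂ V] [AddCommGroup W] [Module ℂ W]
variable {ρ : Representation ℂ G V} {σ : Representation ℂ G W}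

/-- Every vector has a countable orbit. Smooth representations of second countable groups have
this property, and it bounds the dimension of the irreducible ones. -/
def CountableOrbits (ρ : Representation ℂ G V) : Prop :=
  ∀ v : V, (Set.range fun g => ρ g v).Countable

lemma CountableOrbits.of_injective {f : V →ₗ[ℂ] W} (hf : Equivariant ρ σ f)
    (hinj : Function.Injective f) (hσ : CountableOrbits σ) : CountableOrbits ρ := by
  intro v
  refine Set.countable_of_injective_of_countable_image hinj.injOn ((hσ (f v)).mono ?_)
  rintro _ ⟨_, ⟨g, rfl⟩, rfl⟩
  exact ⟨g, (hf g v).symm⟩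

lemma CountableOrbits.of_surjective {f : V →ₗ[ℂ] W} (hf : Equivariant ρ σ f)
    (hsurj : Function.Surjective f) (hρ : CountableOrbits ρ) : CountableOrbits σ := by
  intro w
  obtain ⟨v, rfl⟩ := hsurj w
  refine ((hρ v).image f).mono ?_
  rintro _ ⟨g, rfl⟩
  exact ⟨ρ g v, ⟨g, rfl⟩, hf g v⟩

lemma CountableOrbits.subquot (hρ : CountableOrbits ρ) {A B : Submodule ℂ V}
    (hA : Invariant ρ A) (hB : Invariant ρ B) : CountableOrbits (subquot ρ hA hB) :=
  .of_surjective (mkQ_equivariant _ _ _) (Submodule.mkQ_surjective _)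
    (.of_injective (f := B.subtype) (fun _ _ => rfl) B.injective_subtype hρ)

lemma Irred.rank_le_aleph0 (hρ : Irred ρ) (hcount : CountableOrbits ρ) :
    Module.rank ℂ V ≤ Cardinal.aleph0 := by
  have := hρ.1
  obtain ⟨v, hv⟩ := exists_ne (0 : V)
  rw [← rank_top ℂ V, ← hρ.span_range_eq_top hv]
  exact (rank_span_le _).trans (hcount v).le_aleph0

/-- Schur's lemma in the form of Dixmier. -/
lemma Irred.finrank_eq_one {T : Type*} [CommMonoid T] {τ : Representation ℂ T V} (hτ : Irred τ)
    (hcount : CountableOrbits τ) : Module.finrank ℂ V = 1 := by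
  have := hτ.isIrreducible
  refine finrank_eq_one_of_rank_lt_mk (F := ℂ) (A := MonoidAlgebra ℂ T) (M := τ.asModule) ?_
  have hrank : Module.rank ℂ τ.asModule ≤ Cardinal.aleph0 := hτ.rank_le_aleph0 hcount
  rw [Cardinal.mk_complex, Cardinal.lift_continuum]
  exact (Cardinal.lift_le_aleph0.mpr hrank).trans_lt Cardinal.aleph0_lt_continuum

lemma countable_range_of_isLocallyConstant {X Y : Type*} [TopologicalSpace X]
    [TopologicalSpace.SeparableSpace X] {f : X → Y} (hf : IsLocallyConstant f) :
    (Set.range f).Countable := by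
  have : Countable (Set.range f) := by
    refine Pairwise.countable_of_isOpen_disjoint (s := fun y : Set.range f => f ⁻¹' {y.1})
      (fun y z hyz => ?_) (fun y => hf.isOpen_fiber y.1) fun ⟨_, x, hx⟩ => ⟨x, hx⟩
    exact Disjoint.preimage f (Set.disjoint_singleton.mpr (Subtype.coe_injective.ne hyz))
  exact Set.countable_coe_iff.mp this

lemma isLocallyConstant_apply {G : Type*} [Group G] [TopologicalSpace G] [ContinuousMul G]
    {ρ : Representation ℂ G V} {v : V} (hv : IsOpen {g : G | ρ g v = v}) :
    IsLocallyConstant fun g => ρ g v := by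
  rw [IsLocallyConstant.iff_eventually_eq]
  intro g
  have hstab : ∀ᶠ h in nhds (g⁻¹ * g), ρ h v = v := hv.mem_nhds (by simp)
  filter_upwards [(continuous_const_mul g⁻¹).continuousAt.eventually hstab] with h hh
  calc ρ h v = ρ (g * (g⁻¹ * h)) v := by rw [mul_inv_cancel_left]
    _ = ρ g v := by rw [map_mul, Module.End.mul_apply, hh]

lemma countableOrbits_of_isOpen {G : Type*} [Group G] [TopologicalSpace G] [ContinuousMul G]
    [TopologicalSpace.SeparableSpace G] {ρ : Representation ℂ G V}
    (hρ : ∀ v, IsOpen {g : G | ρ g v = v}) : CountableOrbits ρ :=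
  fun v => countable_range_of_isLocallyConstant (isLocallyConstant_apply (hρ v))

end CountableOrbits

end GRep

lemma finite_of_finite_quotient {R M : Type*} [Ring R] [AddCommGroup M] [Module R M]
    {A B : Submodule R M} [Module.Finite R A] [Module.Finite R (B ⧸ A.comap B.subtype)]
    (hAB : A ≤ B) : Module.Finite R B :=
  have : Module.Finite R (A.comap B.subtype) :=
    Module.Finite.equiv (Submodule.comapSubtypeEquivOfLe hAB).symm
  .of_submodule_quotient (A.comap B.subtype)

lemma CompSeries.finite_of_forall_irred {K V : Type*} [Field K] [AddCommGroup V] [Module ℂ V]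
    {ρ : Rep K V} (c : CompSeries ρ) {N : Submodule ℂ V} (hN : GRep.Invariant ρ N)
    (hfin : ∀ (A B : Submodule ℂ V) (hA : GRep.Invariant ρ A) (hB : GRep.Invariant ρ B), B ≤ N →
      GRep.Irred (GRep.subquot ρ hA hB) → Module.Finite ℂ (B ⧸ A.comap B.subtype)) :
    Module.Finite ℂ N := by
  suffices h : ∀ i ≤ c.n, Module.Finite ℂ ↥(c.W i ⊓ N) by
    have hn := h c.n le_rfl
    rwa [c.top, top_inf_eq] at hn
  intro i hi
  induction i with
  | zero => rw [c.bot, bot_inf_eq]; infer_instance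
  | succ i ih =>
    have hfinA : Module.Finite ℂ ↥(c.W i ⊓ N) := ih (Nat.le_of_succ_le hi)
    rcases (inf_le_inf_right N (c.lt i hi).le).eq_or_lt with heq | hlt
    · rwa [← heq]
    have hA := (c.inv i).inf hN
    have hB := (c.inv (i + 1)).inf hN
    have hirr : GRep.Irred (GRep.subquot ρ hA hB) :=
      GRep.irred_subquot hA hB hlt fun C hC hAC hCB =>
        -- `C = (W i ⊔ C) ⊓ N` by the modular law, so `W i ⊔ C` determines `C`
        (c.maximal i hi (c.W i ⊔ C) ((c.inv i).sup hC) le_sup_left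
          (sup_le (c.lt i hi).le (hCB.trans inf_le_left))).imp
          (fun h => hAC.antisymm' (le_inf (sup_eq_left.mp h) (hCB.trans inf_le_right)))
          fun h => by
            rw [← h, sup_comm, sup_inf_assoc_of_le _ (hCB.trans inf_le_right),
              sup_eq_left.mpr hAC]
    have hquot := hfin _ _ hA hB inf_le_right hirr
    exact finite_of_finite_quotient hlt.le

namespace Aff

variable {K : Type*} [Field K] [TopologicalSpace K]

lemma continuous_xT : Continuous (xT : Kˣ → Aff K) :=
  continuous_induced_rng.mpr (continuous_id.prodMk continuous_const)

lemma continuous_sS : Continuous (sS : K → Aff K) :=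
  continuous_induced_rng.mpr (continuous_const.prodMk continuous_id)

end Aff

lemma secondCountableTopology_units (M : Type*) [Monoid M] [TopologicalSpace M]
    [SecondCountableTopology M] : SecondCountableTopology Mˣ :=
  have : SecondCountableTopology Mᵐᵒᵖ :=
    MulOpposite.opHomeomorph.symm.isInducing.secondCountableTopology
  Units.isInducing_embedProduct.secondCountableTopology

section Invariants

open Aff

variable {K V : Type*} [Field K] [AddCommGroup V] [Module ℂ V] {ρ : Rep K V}

lemma sS_apply_eq_of_sS_mul {U : Submodule ℂ V} (hU : GRep.Invariant ρ U) {u : Kˣ} {b : K}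
    (hfix : ∀ v ∈ U, ρ (sS (u * b)) v = v) : ∀ v ∈ U, ρ (sS b) v = v := by
  intro v hv
  apply (ρ.apply_bijective (xT u)).1
  calc ρ (xT u) (ρ (sS b) v) = ρ (sS (u * b)) (ρ (xT u) v) := by
        simp only [← Module.End.mul_apply, ← map_mul, mul_sS, xT_t]
    _ = ρ (xT u) v := hfix _ (hU _ v hv)

lemma sInv_subquot_eq_top {A B : Submodule ℂ V} (hA : GRep.Invariant ρ A)
    (hB : GRep.Invariant ρ B) (hBS : B ≤ sInv ρ) : sInv (GRep.subquot ρ hA hB) = ⊤ := by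
  refine eq_top_iff.mpr fun x _ b => ?_
  obtain ⟨v, rfl⟩ := Submodule.Quotient.mk_surjective _ x
  exact congrArg Submodule.Quotient.mk (Subtype.ext (hBS v.2 b))

lemma irred_comp_xTHom (hS : sInv ρ = ⊤) (hρ : GRep.Irred ρ) : GRep.Irred (ρ.comp xTHom) := by
  refine ⟨hρ.1, fun U hU => hρ.2 U fun g v hv => ?_⟩
  have hv' : ρ (sS (((g.t⁻¹ : Kˣ) : K) * g.s)) v = v := (hS ▸ Submodule.mem_top : v ∈ sInv ρ) _
  rw [aff_decomp g, map_mul, Module.End.mul_apply, hv']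
  exact hU g.t v hv

lemma IsSmoothRep.countableOrbits_comp_xTHom [TopologicalSpace K] [ContinuousMul K]
    [SecondCountableTopology K] (hρ : IsSmoothRep ρ) : GRep.CountableOrbits (ρ.comp xTHom) :=
  have := secondCountableTopology_units K
  GRep.countableOrbits_of_isOpen fun v => (hρ v).preimage continuous_xT

lemma finite_subquot_of_le_sInv (hcount : GRep.CountableOrbits (ρ.comp xTHom))
    {A B : Submodule ℂ V} (hA : GRep.Invariant ρ A) (hB : GRep.Invariant ρ B)
    (hBS : B ≤ sInv ρ) (hirr : GRep.Irred (GRep.subquot ρ hA hB)) :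
    Module.Finite ℂ (B ⧸ A.comap B.subtype) :=
  Module.finite_of_finrank_eq_succ <|
    (irred_comp_xTHom (sInv_subquot_eq_top hA hB hBS) hirr).finrank_eq_one
      (hcount.subquot (fun u => hA (xT u)) fun u => hB (xT u))

end Invariants

section FiniteDimensional

open Aff

variable {K V : Type*} [Field K] [TopologicalSpace K] [AddCommGroup V] [Module ℂ V]
variable {ρ : Rep K V}

lemma IsSmoothRep.eventually_sS_apply_eq (hρ : IsSmoothRep ρ) {U : Submodule ℂ V} (hU : U.FG) :
    ∀ᶠ b in nhds (0 : K), ∀ v ∈ U, ρ (sS b) v = v := by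
  obtain ⟨F, rfl⟩ := hU
  have hF : ∀ᶠ b in nhds (0 : K), ∀ v ∈ F, ρ (sS b) v = v := by
    rw [Filter.eventually_all_finset]
    intro v _
    refine ((hρ v).preimage continuous_sS).mem_nhds ?_
    change ρ (1 : Aff K) v = v
    rw [map_one, Module.End.one_apply]
  filter_upwards [hF] with b hb v hv
  exact LinearMap.eqOn_span (g := LinearMap.id) hb hv

lemma IsSmoothRep.le_sInv [ContinuousMul K] [(nhdsWithin (0 : K) {0}ᶜ).NeBot]
    (hρ : IsSmoothRep ρ) {U : Submodule ℂ V} (hU : GRep.Invariant ρ U) (hfg : U.FG) :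
    U ≤ sInv ρ := by
  intro v hv b
  have hscale : Filter.Tendsto (fun l : K => l * b) (nhdsWithin 0 {0}ᶜ) (nhds 0) := by
    simpa using ((continuous_mul_const b).tendsto 0).mono_left nhdsWithin_le_nhds
  obtain ⟨l, hfix, hl⟩ :=
    ((hscale.eventually (hρ.eventually_sS_apply_eq hfg)).and self_mem_nhdsWithin).exists
  exact sS_apply_eq_of_sS_mul (u := Units.mk0 l hl) hU hfix v hv

end FiniteDimensional

theorem statement5_general {K : Type*} [Field K] [TopologicalSpace K] [ContinuousMul K]
    [SecondCountableTopology K] [(nhdsWithin (0 : K) {0}ᶜ).NeBot]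
    {V : Type*} [AddCommGroup V] [Module ℂ V]
    (ρ : Rep K V) (hρ : IsSmoothRep ρ) (c : CompSeries ρ) :
    (∀ U : Submodule ℂ V, GRep.Invariant ρ U → Module.Finite ℂ ↥U → U ≤ sInv ρ) ∧
    Module.Finite ℂ ↥(sInv ρ) :=
  ⟨fun _ hU hfin => hρ.le_sInv hU (Module.Finite.iff_fg.mp hfin),
    c.finite_of_forall_irred (sInv_invariant ρ) fun _ _ hA hB hBS hirr =>
      finite_subquot_of_le_sInv hρ.countableOrbits_comp_xTHom hA hB hBS hirr⟩

section Statements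

open Aff

variable {K : Type*} [NontriviallyNormedField K] [IsUltrametricDist K] [ProperSpace K]

theorem statement5
    (hchar : (2 : K) ≠ 0)
    {V : Type*} [AddCommGroup V] [Module ℂ V]
    (ρ : Rep K V) (hρ : IsSmoothRep ρ) (c : CompSeries ρ) :
    (∀ U : Submodule ℂ V, GRep.Invariant ρ U → Module.Finite ℂ ↥U → U ≤ sInv ρ) ∧
    Module.Finite ℂ ↥(sInv ρ) :=
  statement5_general ρ hρ c

end Statements

end PSW
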